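/- For all named GS4 derivations P with conclusion ⊢Γ,A∨B, the axiom graph is invariant under inversion of the disjunction: ⟦inv(P, A∨B)⟧ = ⟦P⟧. -/

import Mathlib

open scoped Classical

noncomputable section

namespace GS4

/-- Named classical propositional formulas over atoms `α`, with names in `ℕ`. -/
inductive NForm (α : Type) : Type
  | atom : ℕ → α → NForm α
  | or   : NForm α → NForm α → NForm α
  | and  : NForm α → NForm α → NForm α

variable {α : Type}

/-- Name-preserving De Morgan negation, w.r.t. an involution `bar` on atoms. -/
def negF (bar : α → α) : NForm α → NForm α
  | .atom x a => .atom x (bar a)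
  | .or A B => .and (negF bar A) (negF bar B)
  | .and A B => .or (negF bar A) (negF bar B)

/-- The set of names occurring in a named formula. -/
def NForm.names : NForm α → Set ℕ
  | .atom x _ => {x}
  | .or A B => A.names ∪ B.names
  | .and A B => A.names ∪ B.names

/-- A named formula is sharing-free if every name occurs at most once in it. -/
def NForm.sharingFree : NForm α → Prop
  | .atom _ _ => True
  | .or A B => A.sharingFree ∧ B.sharingFree ∧ Disjoint A.names B.names
  | .and A B => A.sharingFree ∧ B.sharingFree ∧ Disjoint A.names B.names

def NForm.isAtom : NForm α → Prop
  | .atom _ _ => True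
  | _ => False

/-- Anonymous formulas (shapes): `A ≡ B` iff their shapes coincide. -/
inductive Shape (α : Type) : Type
  | atom : α → Shape α
  | or   : Shape α → Shape α → Shape α
  | and  : Shape α → Shape α → Shape α

def NForm.shape : NForm α → Shape α
  | .atom _ a => .atom a
  | .or A B => .or A.shape B.shape
  | .and A B => .and A.shape B.shape

/-- `HasAtom A x a`: the atomic formula `x:a` occurs in `A`. -/
def HasAtom : NForm α → ℕ → α → Prop
  | .atom y b, x, a => y = x ∧ b = a
  | .or A B, x, a => HasAtom A x a ∨ HasAtom B x a
  | .and A B, x, a => HasAtom A x a ∨ HasAtom B x a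

/-- Names of a finite set of named formulas. -/
def snames (Γ : Finset (NForm α)) : Set ℕ := ⋃ A ∈ Γ, A.names

/-- A finite set of named formulas is sharing-free if all its elements are
sharing-free with pairwise disjoint name sets. -/
def SFSet (Γ : Finset (NForm α)) : Prop :=
  (∀ A ∈ Γ, A.sharingFree) ∧
  ∀ A ∈ Γ, ∀ B ∈ Γ, A ≠ B → Disjoint A.names B.names

/-- `x:a` occurs in some formula of `Γ` (i.e. `Γ[x] = a` for sharing-free `Γ`). -/
def HasAtomS (Γ : Finset (NForm α)) (x : ℕ) (a : α) : Prop :=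
  ∃ A ∈ Γ, HasAtom A x a

/-- Branch sets of named formulas. -/
def BrF : NForm α → Set (Set ℕ)
  | .atom x _ => {{x}}
  | .or A B => {X | ∃ Y ∈ BrF A, ∃ Z ∈ BrF B, X = Y ∪ Z}
  | .and A B => BrF A ∪ BrF B

/-- Branch sets of sequents (finite sharing-free sets of named formulas). -/
def BrS (Γ : Finset (NForm α)) : Set (Set ℕ) :=
  {X | X ⊆ snames Γ ∧ ∀ A ∈ Γ, X ∩ A.names ∈ BrF A}

/-! ## Branch-labeled name graphs -/

/-- A branch-labeled name graph: vertices and a relation between unordered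
pairs of vertices and branch labels. -/
structure BLGraph : Type where
  verts : Set ℕ
  rel : Sym2 ℕ → Set ℕ → Prop

/-- Well-formedness of a bl-graph: related pairs consist of distinct vertices,
labels are sets of vertices, and each edge is included in its labels. -/
def BLGraph.IsBL (G : BLGraph) : Prop :=
  ∀ e X, G.rel e X → ¬ e.IsDiag ∧ X ⊆ G.verts ∧ ∀ v ∈ e, v ∈ X

def BLGraph.Edges (G : BLGraph) : Set (Sym2 ℕ) := {e | ∃ X, G.rel e X}

def BLGraph.Br (G : BLGraph) : Set (Set ℕ) := {X | ∃ e, G.rel e X}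

def BLGraph.union (G H : BLGraph) : BLGraph :=
  ⟨G.verts ∪ H.verts, fun e X => G.rel e X ∨ H.rel e X⟩

/-- Restriction `G↾_S` of a bl-graph. -/
def BLGraph.restrict (G : BLGraph) (S : Set ℕ) : BLGraph :=
  ⟨G.verts ∩ S, fun e X => G.rel e X ∧ X ⊆ S⟩

/-- The interface-relativized edge-branch relation `e ⊰^I_G X`. -/
def BLGraph.relI (G : BLGraph) (I : Set ℕ) (e : Sym2 ℕ) (X : Set ℕ) : Prop :=
  ∃ Y, G.rel e Y ∧ X = Y \ I

/-- `z 0, …, z (n-1)` is an `X`-labeled alternating path between `G` and `H`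
through the interface `I`. -/
def AltPath (G H : BLGraph) (I X : Set ℕ) (n : ℕ) (z : ℕ → ℕ) : Prop :=
  1 < n ∧
  (∀ i < n, ∀ j < n, z i = z j → i = j) ∧
  (∀ i, 0 < i → i + 1 < n → z i ∈ I) ∧
  ((∀ i, i + 1 < n →
      (Even i → G.relI I s(z i, z (i + 1)) X) ∧ (¬ Even i → H.relI I s(z i, z (i + 1)) X)) ∨
   (∀ i, i + 1 < n →
      (Even i → H.relI I s(z i, z (i + 1)) X) ∧ (¬ Even i → G.relI I s(z i, z (i + 1)) X)))

/-- Composition of bl-graphs over an interface `I`. -/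
def BLGraph.comp (G H : BLGraph) (I : Set ℕ) : BLGraph :=
  ⟨(G.verts ∪ H.verts) \ I,
   fun e X => ∃ n z, AltPath G H I X n z ∧ z 0 ∉ I ∧ z (n - 1) ∉ I ∧
     e = s(z 0, z (n - 1))⟩

/-- The weakening operator on bl-graphs: add vertices `V` and extend every
branch label by a member of `Brs`. -/
def blwk (V : Set ℕ) (Brs : Set (Set ℕ)) (G : BLGraph) : BLGraph :=
  ⟨G.verts ∪ V, fun e X => ∃ Y Z, G.rel e Y ∧ Z ∈ Brs ∧ X = Y ∪ Z⟩

/-- The bl-identity graph `id_{A,C}` on a pair of dual formulas. -/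
def blid : NForm α → NForm α → BLGraph
  | .atom x _, .atom y _ => ⟨{x, y}, fun e X => e = s(x, y) ∧ X = {x, y}⟩
  | .or A1 A2, .and C1 C2 =>
      (blwk A2.names (BrF A2) (blid A1 C1)).union (blwk A1.names (BrF A1) (blid A2 C2))
  | .and A1 A2, .or C1 C2 =>
      (blwk C2.names (BrF C2) (blid A1 C1)).union (blwk C1.names (BrF C1) (blid A2 C2))
  | _, _ => ⟨∅, fun _ _ => False⟩

/-! ## Simple name graphs -/

/-- A simple name graph. -/
structure NGraph : Type where
  verts : Set ℕ
  edges : Set (Sym2 ℕ)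

/-- Subgraph relation `H ⊑ G`. -/
def NGraph.Sub (H G : NGraph) : Prop := H.verts ⊆ G.verts ∧ H.edges ⊆ G.edges

def NGraph.union (G H : NGraph) : NGraph := ⟨G.verts ∪ H.verts, G.edges ∪ H.edges⟩

/-- Induced subgraph `G↾_S`. -/
def NGraph.restrict (G : NGraph) (S : Set ℕ) : NGraph :=
  ⟨G.verts ∩ S, {e ∈ G.edges | ∀ v ∈ e, v ∈ S}⟩

/-- Alternating paths between simple name graphs through an interface. -/
def NAltPath (G H : NGraph) (I : Set ℕ) (n : ℕ) (z : ℕ → ℕ) : Prop :=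
  0 < n ∧
  (∀ i < n, ∀ j < n, z i = z j → i = j) ∧
  (∀ i, 0 < i → i + 1 < n → z i ∈ I) ∧
  ((∀ i, i + 1 < n →
      (Even i → s(z i, z (i + 1)) ∈ G.edges) ∧ (¬ Even i → s(z i, z (i + 1)) ∈ H.edges)) ∨
   (∀ i, i + 1 < n →
      (Even i → s(z i, z (i + 1)) ∈ H.edges) ∧ (¬ Even i → s(z i, z (i + 1)) ∈ G.edges)))

/-- Composition of simple name graphs over an interface. -/
def NGraph.comp (G H : NGraph) (I : Set ℕ) : NGraph :=
  ⟨(G.verts ∪ H.verts) \ I,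
   {e | ∃ x y, x ≠ y ∧ x ∈ (G.verts ∪ H.verts) \ I ∧ y ∈ (G.verts ∪ H.verts) \ I ∧
        e = s(x, y) ∧ ∃ n z, NAltPath G H I n z ∧ z 0 = x ∧ z (n - 1) = y}⟩

/-- The identity graph `Id_{A,C}` on a pair of dual formulas. -/
def idg : NForm α → NForm α → NGraph
  | .atom x _, .atom y _ => ⟨{x, y}, {s(x, y)}⟩
  | .or A1 A2, .and C1 C2 => (idg A1 C1).union (idg A2 C2)
  | .and A1 A2, .or C1 C2 => (idg A1 C1).union (idg A2 C2)
  | _, _ => ⟨∅, ∅⟩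

/-- The edgeless (weakening) graph on the names of `Γ`. -/
def wkg (Γ : Finset (NForm α)) : NGraph := ⟨snames Γ, ∅⟩

/-! ## Named GS4 derivations -/

/-- Named GS4 derivation trees. -/
inductive Deriv (α : Type) : Type
  | ax (Γ : Finset (NForm α)) (A C : NForm α)
  | cut (A : NForm α) (P Q : Deriv α)
  | sup (P Q : Deriv α)
  | orI (A B : NForm α) (P : Deriv α)
  | andI (A B : NForm α) (P Q : Deriv α)

/-- Conclusion of a derivation tree. -/
def concl : Deriv α → Finset (NForm α)
  | .ax Γ A C => insert A (insert C Γ)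
  | .cut A P _ => (concl P).erase A
  | .sup P _ => concl P
  | .orI A B P => insert (NForm.or A B) (((concl P).erase A).erase B)
  | .andI A B P _ => insert (NForm.and A B) ((concl P).erase A)

/-- Well-formedness of derivation trees w.r.t. the atom involution `bar`:
each rule is applied correctly to sharing-free named sequents. -/
def WF (bar : α → α) : Deriv α → Prop
  | .ax Γ A C =>
      A.shape = (negF bar C).shape ∧
      A.sharingFree ∧ C.sharingFree ∧ SFSet Γ ∧
      Disjoint A.names C.names ∧
      Disjoint A.names (snames Γ) ∧ Disjoint C.names (snames Γ)
  | .cut A P Q =>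
      WF bar P ∧ WF bar Q ∧
      ∃ Γ : Finset (NForm α), A ∉ Γ ∧ negF bar A ∉ Γ ∧
        concl P = insert A Γ ∧ concl Q = insert (negF bar A) Γ ∧
        A.sharingFree ∧ SFSet Γ ∧ Disjoint A.names (snames Γ)
  | .sup P Q => WF bar P ∧ WF bar Q ∧ concl P = concl Q
  | .orI A B P =>
      WF bar P ∧
      ∃ Γ : Finset (NForm α), A ∉ Γ ∧ B ∉ Γ ∧ A ≠ B ∧
        concl P = insert A (insert B Γ) ∧
        A.sharingFree ∧ B.sharingFree ∧ SFSet Γ ∧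
        Disjoint A.names B.names ∧
        Disjoint A.names (snames Γ) ∧ Disjoint B.names (snames Γ)
  | .andI A B P Q =>
      WF bar P ∧ WF bar Q ∧
      ∃ Γ : Finset (NForm α), A ∉ Γ ∧ B ∉ Γ ∧
        concl P = insert A Γ ∧ concl Q = insert B Γ ∧
        A.sharingFree ∧ B.sharingFree ∧ SFSet Γ ∧
        Disjoint A.names B.names ∧
        Disjoint A.names (snames Γ) ∧ Disjoint B.names (snames Γ)

/-- A derivation is cut-free if it contains no cut rule. -/
def CutFree : Deriv α → Prop
  | .ax _ _ _ => True
  | .cut _ _ _ => False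
  | .sup P Q => CutFree P ∧ CutFree Q
  | .orI _ _ P => CutFree P
  | .andI _ _ P Q => CutFree P ∧ CutFree Q

/-- The branch-labeled axiom graph `⟨⟨P⟩⟩` of a derivation. -/
def blaxg : Deriv α → BLGraph
  | .ax Γ A C => blwk (snames Γ) (BrS Γ) (blid A C)
  | .cut A P Q => BLGraph.comp (blaxg P) (blaxg Q) A.names
  | .sup P Q => (blaxg P).union (blaxg Q)
  | .orI _ _ P => blaxg P
  | .andI _ _ P Q => (blaxg P).union (blaxg Q)

/-- The (simple) axiom graph `⟦P⟧` of a derivation. -/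
def axg : Deriv α → NGraph
  | .ax Γ A C => (wkg Γ).union (idg A C)
  | .cut A P Q => NGraph.comp (axg P) (axg Q) A.names
  | .sup P Q => (axg P).union (axg Q)
  | .orI _ _ P => axg P
  | .andI _ _ P Q => (axg P).union (axg Q)

/-! ## Inversion and isolation -/

/-- Inversion of a disjunction `D ∨ E` in the conclusion. -/
def inv (D E : NForm α) : Deriv α → Deriv α
  | .ax Γ A C =>
      if A = NForm.or D E then
        match C with
        | .and C1 C2 =>
            .andI C1 C2 (.ax (insert E Γ) D C1) (.ax (insert D Γ) E C2)
        | _ => .ax Γ A C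
      else if C = NForm.or D E then
        match A with
        | .and A1 A2 =>
            .andI A1 A2 (.ax (insert E Γ) A1 D) (.ax (insert D Γ) A2 E)
        | _ => .ax Γ A C
      else
        .ax (insert D (insert E (Γ.erase (NForm.or D E)))) A C
  | .cut A P Q => .cut A (inv D E P) (inv D E Q)
  | .sup P Q => .sup (inv D E P) (inv D E Q)
  | .orI A B P => if A = D ∧ B = E then P else .orI A B (inv D E P)
  | .andI A B P Q => .andI A B (inv D E P) (inv D E Q)

/-- Left inversion of a conjunction `D ∧ E` in the conclusion. -/
def invl (D E : NForm α) : Deriv α → Deriv α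
  | .ax Γ A C =>
      if A = NForm.and D E then
        match C with
        | .or C1 C2 => .orI C1 C2 (.ax (insert C2 Γ) D C1)
        | _ => .ax Γ A C
      else if C = NForm.and D E then
        match A with
        | .or A1 A2 => .orI A1 A2 (.ax (insert A2 Γ) A1 D)
        | _ => .ax Γ A C
      else
        .ax (insert D (Γ.erase (NForm.and D E))) A C
  | .cut A P Q => .cut A (invl D E P) (invl D E Q)
  | .sup P Q => .sup (invl D E P) (invl D E Q)
  | .orI A B P => .orI A B (invl D E P)
  | .andI A B P Q => if A = D ∧ B = E then P else .andI A B (invl D E P) (invl D E Q)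

/-- Right inversion of a conjunction `D ∧ E` in the conclusion. -/
def invr (D E : NForm α) : Deriv α → Deriv α
  | .ax Γ A C =>
      if A = NForm.and D E then
        match C with
        | .or C1 C2 => .orI C1 C2 (.ax (insert C1 Γ) E C2)
        | _ => .ax Γ A C
      else if C = NForm.and D E then
        match A with
        | .or A1 A2 => .orI A1 A2 (.ax (insert A1 Γ) A2 E)
        | _ => .ax Γ A C
      else
        .ax (insert E (Γ.erase (NForm.and D E))) A C
  | .cut A P Q => .cut A (invr D E P) (invr D E Q)
  | .sup P Q => .sup (invr D E P) (invr D E Q)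
  | .orI A B P => .orI A B (invr D E P)
  | .andI A B P Q => if A = D ∧ B = E then Q else .andI A B (invr D E P) (invr D E Q)

/-- Isolation of a non-atomic formula in the conclusion. -/
def isl : NForm α → Deriv α → Deriv α
  | .or A B, P => .orI A B (inv A B P)
  | .and A B, P => .andI A B (invl A B P) (invr A B P)
  | .atom _ _, P => P

/-- Totality of a bl-graph w.r.t. a sharing-free named sequent. -/
def Total (bar : α → α) (G : BLGraph) (Γ : Finset (NForm α)) : Prop :=
  G.verts = snames Γ ∧
  G.Br = BrS Γ ∧
  ∀ x y : ℕ, s(x, y) ∈ G.Edges →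
    ∀ a b : α, HasAtomS Γ x a → HasAtomS Γ y b → a = bar b

end GS4

/-!
Inversion commutes with every rule except the two that act on `D ∨ E` itself. Deleting the `∨`-rule
that introduces it leaves the axiom graph alone, because that rule does not contribute to the graph.
Splitting an axiom on `D ∨ E` and `C₁ ∧ C₂` distributes the edges of the identity graph over the two
smaller axioms; each of these also weakens by the disjunct treated by the other one, whose names are
already vertices of the identity graph there, so that the union is again the original graph.
-/

namespace GS4

variable {α : Type} {bar : α → α}

theorem snames_insert (A : NForm α) (Γ : Finset (NForm α)) :
    snames (insert A Γ) = A.names ∪ snames Γ := by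
  simp [snames]

theorem snames_insert_insert_erase_or {D E : NForm α} {Γ : Finset (NForm α)}
    (h : NForm.or D E ∈ Γ) :
    snames (insert D (insert E (Γ.erase (NForm.or D E)))) = snames Γ :=
  calc
    snames (insert D (insert E (Γ.erase (NForm.or D E))))
        = (NForm.or D E).names ∪ snames (Γ.erase (NForm.or D E)) := by
      simp only [snames_insert, NForm.names, Set.union_assoc]
    _ = snames Γ := by rw [← snames_insert, Finset.insert_erase h]

theorem verts_idg {A C : NForm α} (h : A.shape = (negF bar C).shape) :
    (idg A C).verts = A.names ∪ C.names := by
  induction A generalizing C with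
  | atom x a =>
    cases C <;> simp only [NForm.shape, negF, reduceCtorEq] at h
    rfl
  | or A₁ A₂ ih₁ ih₂ | and A₁ A₂ ih₁ ih₂ =>
    cases C <;> simp only [NForm.shape, negF, reduceCtorEq, Shape.or.injEq, Shape.and.injEq] at h
    simp only [idg, NGraph.union, NForm.names, ih₁ h.1, ih₂ h.2]
    exact Set.union_union_union_comm ..

theorem names_left_subset_verts_idg {A C : NForm α} (h : A.shape = (negF bar C).shape) :
    A.names ⊆ (idg A C).verts :=
  verts_idg h ▸ Set.subset_union_left

theorem names_right_subset_verts_idg {A C : NForm α} (h : A.shape = (negF bar C).shape) :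
    C.names ⊆ (idg A C).verts :=
  verts_idg h ▸ Set.subset_union_right

theorem wkg_insert_union_union_wkg_insert_union (Γ : Finset (NForm α)) {D E : NForm α}
    {G H : NGraph} (hD : D.names ⊆ G.verts) (hE : E.names ⊆ H.verts) :
    ((wkg (insert E Γ)).union G).union ((wkg (insert D Γ)).union H) =
      (wkg Γ).union (G.union H) := by
  have hverts : E.names ∪ snames Γ ∪ G.verts ∪ (D.names ∪ snames Γ ∪ H.verts) =
      snames Γ ∪ (G.verts ∪ H.verts) :=
    calc
      _ = snames Γ ∪ (D.names ∪ G.verts ∪ (E.names ∪ H.verts)) := by grind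
      _ = snames Γ ∪ (G.verts ∪ H.verts) := by
        rw [Set.union_eq_right.2 hD, Set.union_eq_right.2 hE]
  simp only [NGraph.union, wkg, snames_insert, hverts, Set.empty_union]

theorem axg_inv_ax_left {Γ : Finset (NForm α)} {C D E : NForm α}
    (h : (NForm.or D E).shape = (negF bar C).shape) :
    axg (inv D E (.ax Γ (.or D E) C)) = axg (.ax Γ (.or D E) C) := by
  cases C <;> simp only [NForm.shape, negF, reduceCtorEq, Shape.or.injEq] at h
  simp only [inv, if_true, axg, idg]
  exact wkg_insert_union_union_wkg_insert_union Γ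
    (names_left_subset_verts_idg h.1) (names_left_subset_verts_idg h.2)

theorem axg_inv_ax_right {Γ : Finset (NForm α)} {A D E : NForm α}
    (h : A.shape = (negF bar (NForm.or D E)).shape) :
    axg (inv D E (.ax Γ A (.or D E))) = axg (.ax Γ A (.or D E)) := by
  cases A <;> simp only [NForm.shape, negF, reduceCtorEq, Shape.and.injEq] at h
  simp only [inv, reduceCtorEq, if_true, if_false, axg, idg]
  exact wkg_insert_union_union_wkg_insert_union Γ
    (names_right_subset_verts_idg h.1) (names_right_subset_verts_idg h.2)

theorem axg_inv_ax {Γ : Finset (NForm α)} {A C D E : NForm α}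
    (hdual : A.shape = (negF bar C).shape) (h : NForm.or D E ∈ concl (.ax Γ A C)) :
    axg (inv D E (.ax Γ A C)) = axg (.ax Γ A C) := by
  by_cases hA : A = .or D E
  · subst hA
    exact axg_inv_ax_left hdual
  by_cases hC : C = .or D E
  · subst hC
    exact axg_inv_ax_right hdual
  have hΓ : NForm.or D E ∈ Γ := by
    simpa only [concl, Finset.mem_insert, Ne.symm hA, Ne.symm hC, false_or] using h
  simp only [inv, if_neg hA, if_neg hC, axg, wkg, snames_insert_insert_erase_or hΓ]

theorem mem_concl_of_mem_concl_orI {A B F : NForm α} {P : Deriv α}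
    (h : F ∈ concl (.orI A B P)) (hF : F ≠ .or A B) : F ∈ concl P :=
  Finset.mem_of_mem_erase <| Finset.mem_of_mem_erase <| Finset.mem_of_mem_insert_of_ne h hF

theorem WF.mem_concl_of_mem_concl_cut {A F : NForm α} {P Q : Deriv α}
    (hwf : WF bar (.cut A P Q)) (h : F ∈ concl (.cut A P Q)) : F ∈ concl P ∧ F ∈ concl Q := by
  obtain ⟨-, -, Γ, -, -, hP, hQ, -⟩ := hwf
  obtain ⟨hne, hmem⟩ := Finset.mem_erase.1 h
  have hΓ : F ∈ Γ := Finset.mem_of_mem_insert_of_ne (hP ▸ hmem) hne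
  exact ⟨hmem, hQ ▸ Finset.mem_insert_of_mem hΓ⟩

theorem WF.mem_concl_of_mem_concl_andI {A B F : NForm α} {P Q : Deriv α}
    (hwf : WF bar (.andI A B P Q)) (h : F ∈ concl (.andI A B P Q)) (hF : F ≠ .and A B) :
    F ∈ concl P ∧ F ∈ concl Q := by
  obtain ⟨-, -, Γ, -, -, hP, hQ, -⟩ := hwf
  obtain ⟨hne, hmem⟩ := Finset.mem_erase.1 (Finset.mem_of_mem_insert_of_ne h hF)
  have hΓ : F ∈ Γ := Finset.mem_of_mem_insert_of_ne (hP ▸ hmem) hne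
  exact ⟨hmem, hQ ▸ Finset.mem_insert_of_mem hΓ⟩

theorem axg_inv_or_general {P : Deriv α} (hP : WF bar P) {A B : NForm α}
    (h : NForm.or A B ∈ concl P) : axg (inv A B P) = axg P := by
  induction P with
  | ax Γ C D => exact axg_inv_ax hP.1 h
  | cut C P Q ihP ihQ =>
    obtain ⟨memP, memQ⟩ := hP.mem_concl_of_mem_concl_cut h
    simp only [inv, axg, ihP hP.1 memP, ihQ hP.2.1 memQ]
  | sup P Q ihP ihQ =>
    obtain ⟨wfP, wfQ, hPQ⟩ := hP
    have memP : NForm.or A B ∈ concl P := h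
    simp only [inv, axg, ihP wfP memP, ihQ wfQ (hPQ ▸ memP)]
  | orI C D P ih =>
    by_cases hCD : C = A ∧ D = B
    · simp only [inv, if_pos hCD, axg]
    · have hne : NForm.or A B ≠ .or C D := by simpa only [ne_eq, NForm.or.injEq, eq_comm] using hCD
      simp only [inv, if_neg hCD, axg, ih hP.1 (mem_concl_of_mem_concl_orI h hne)]
  | andI C D P Q ihP ihQ =>
    obtain ⟨memP, memQ⟩ := hP.mem_concl_of_mem_concl_andI h nofun
    simp only [inv, axg, ihP hP.1 memP, ihQ hP.2.1 memQ]

end GS4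

/-- the axiom graph is invariant under inversion of a
disjunction in the conclusion. -/
theorem GS4.axg_inv_or {α : Type} (bar : α → α)
    (hbar : Function.Involutive bar) (hfix : ∀ a, bar a ≠ a)
    (P : GS4.Deriv α) (hP : GS4.WF bar P)
    (A B : GS4.NForm α) (h : GS4.NForm.or A B ∈ GS4.concl P) :
    GS4.axg (GS4.inv A B P) = GS4.axg P :=
  GS4.axg_inv_or_general hP h
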